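/- arXiv:1012.2853 — 2 statements merged into one kernel-verified Lean document; each statement's English description precedes it below -/
import Mathlib

section
/- Let M ≥ 2, A > 0, C₀ > 0, and for each ε > 0 let B_ε > 0. Let s : ℕ → [0,∞) satisfy: (mean value) Σ_{k ≤ T} s_k ≤ A·T for every real T ≥ 1; and (short interval) Σ_{k : |k−N| ≤ N^{2/3}} s_k ≤ B_ε·N^{2/3+ε} for every ε > 0 and every integer N ≥ 1. Let w : ℕ × ℕ → [0,∞) satisfy, for all integers n, k ≥ 1: (i) if 1.1·M⁻¹·n ≤ k ≤ 0.9·M·n then w(k,n) ≤ C₀·n^{−1/2}; (ii) if 0.9·M·n ≤ k ≤ 1.1·M·n then w(k,n) ≤ C₀·k^{−1/3}·(1 + k^{−1/3}·|M·n − k|)^{−1/4}; (iii) if 0.9·M⁻¹·n ≤ k ≤ 1.1·M⁻¹·n then w(k,n) ≤ C₀·k^{−1/3}·(1 + k^{−1/3}·|M⁻¹·n − k|)^{−1/4}; (iv) if k ≥ 1.1·M·n or k ≤ 0.9·M⁻¹·n then w(k,n) ≤ C₀·(k+n)^{−2}. Then for every δ > 0 there exists a constant C > 0 (depending on δ, M,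 A, C₀ and the B_ε) such that Σ_{k ≥ 1} s_k · w(k,n)² ≤ C·n^{δ} for every integer n ≥ 1. -/
/-!
The sum is split according to the range in which `k` lies. In the regular range the mean value
bound beats the factor `n⁻¹`. In the cutoff range the pointwise bound `s k ≤ A k`, a special case
of the mean value bound, leaves a multiple of `∑ k⁻²`.

The substance is the resonance range around a point `X` (`X = M n` or `X = M⁻¹ n`), treated in
`resonance_sum`. Cut it into the shells `j L ≤ |k - X| < (j + 1) L` with `L = X^(2/3) / 2`. By the
short interval bound each shell carries `s`-mass `O(X^(2/3 + ε))` (`shell_mass`), and on it the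
squared weight is `O(X^(-2/3))` for `j = 0` and `O(X^(-2/3) · X^(-1/6) j^(-1/2))` for `j ≥ 1`
(`weight_le`). Only `j ≤ X^(1/3) / 5` occurs, so `∑ j^(-1/2) = O(X^(1/6))` and the total is
`O(X^ε)`. To keep exponents integral, the estimates are written in terms of `y = X^(1/6)`.
-/

open scoped ENNReal

open Finset

/-! ### Extended sums and finite sums -/

/-- A bound for an extended sum of nonnegative terms over a subtype bounds every finite subsum. -/
lemma sum_le_of_tsum_le {p : ℕ → Prop} {f : ℕ → ℝ} (hf : ∀ k, 0 ≤ f k) {c : ℝ} (hc : 0 ≤ c)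
    (h : ∑' k : {k : ℕ // p k}, ENNReal.ofReal (f k) ≤ ENNReal.ofReal c)
    (F : Finset ℕ) (hF : ∀ k ∈ F, p k) : ∑ k ∈ F, f k ≤ c := by
  classical
  rw [← ENNReal.ofReal_le_ofReal_iff hc, ENNReal.ofReal_sum_of_nonneg fun k _ => hf k]
  refine le_trans (le_of_eq ?_) ((ENNReal.sum_le_tsum (F.subtype p)).trans h)
  exact (Finset.sum_subtype_of_mem (fun k => ENNReal.ofReal (f k)) hF).symm

lemma tsum_le_of_sum_le {p : ℕ → Prop} {f : ℕ → ℝ} (hf : ∀ k, 0 ≤ f k) {c : ℝ}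
    (h : ∀ F : Finset ℕ, (∀ k ∈ F, p k) → ∑ k ∈ F, f k ≤ c) :
    ∑' k : {k : ℕ // p k}, ENNReal.ofReal (f k) ≤ ENNReal.ofReal c := by
  rw [ENNReal.tsum_eq_iSup_sum]
  refine iSup_le fun S => ?_
  rw [← ENNReal.ofReal_sum_of_nonneg fun (k : {k : ℕ // p k}) _ => hf k]
  apply ENNReal.ofReal_le_ofReal
  have := h (S.map (Function.Embedding.subtype p)) (by
    intro k hk
    obtain ⟨a, -, rfl⟩ := Finset.mem_map.1 hk
    exact a.2)
  rwa [Finset.sum_map] at this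

/-! ### The Airy weight on a shell -/

lemma sum_inv_sqrt_le (J : ℕ) :
    ∑ j ∈ range J, 1 / √((j : ℝ) + 1) ≤ 2 * √(J : ℝ) := by
  induction J with
  | zero => simp
  | succ J ih =>
    rw [Finset.sum_range_succ]
    have ha : 0 ≤ √(J : ℝ) := Real.sqrt_nonneg _
    have hb : 0 < √((J : ℝ) + 1) := Real.sqrt_pos.2 (by positivity)
    have ha2 := Real.sq_sqrt (show (0 : ℝ) ≤ J by positivity)
    have hb2 := Real.sq_sqrt (show (0 : ℝ) ≤ (J : ℝ) + 1 by positivity)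
    have : 1 / √((J : ℝ) + 1) ≤ 2 * √((J : ℝ) + 1) - 2 * √(J : ℝ) := by
      rw [div_le_iff₀ hb]
      nlinarith [sq_nonneg (√((J : ℝ) + 1) - √(J : ℝ))]
    push_cast
    linarith

/-- Up to the factor `2 y⁻⁴`, with `y = X^(1/6)`, the bound for the squared Airy weight at
distance `≥ j y⁴ / 2` from the resonance point `X`. -/
noncomputable def shellWeight (y : ℝ) (j : ℕ) : ℝ :=
  if j = 0 then 1 else 2 / (y * √(j : ℝ))

lemma shellWeight_nonneg {y : ℝ} (hy : 0 < y) (j : ℕ) : 0 ≤ shellWeight y j := by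
  unfold shellWeight; split_ifs <;> positivity

lemma sum_shellWeight_le {y : ℝ} (hy : 0 < y) {J : ℕ} (hJ : (J : ℝ) ≤ y ^ 2 / 4) :
    ∑ j ∈ range (J + 1), shellWeight y j ≤ 3 := by
  rw [Finset.sum_range_succ']
  have h1 : ∀ j : ℕ, shellWeight y (j + 1) = 2 / y * (1 / √((j : ℝ) + 1)) := by
    intro j
    simp only [shellWeight, Nat.succ_ne_zero, if_false]
    push_cast
    rw [div_mul_div_comm, mul_one]
  have h2 : √(J : ℝ) ≤ y / 2 := by
    apply Real.sqrt_le_iff.2 ⟨by positivity, by nlinarith⟩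
  simp only [h1, ← Finset.mul_sum]
  have h3 : 2 / y * ∑ j ∈ range J, 1 / √((j : ℝ) + 1) ≤ 2 / y * y := by
    gcongr
    linarith [sum_inv_sqrt_le J]
  rw [div_mul_cancel₀ _ hy.ne'] at h3
  simp only [shellWeight, if_true]
  linarith

/-- If `x ≍ y⁶` then `x^(-1/3) ≍ y⁻²`. -/
lemma rpow_neg_third_bounds {x y : ℝ} (hy : 0 < y) (h1 : 0.9 * y ^ 6 ≤ x)
    (h2 : x ≤ 1.1 * y ^ 6) :
    1 / (2 * y ^ 2) ≤ x ^ (-(1 : ℝ) / 3) ∧ (x ^ (-(1 : ℝ) / 3)) ^ 2 ≤ 2 / y ^ 4 := by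
  have hx : 0 < x := lt_of_lt_of_le (by positivity) h1
  set z := x ^ (-(1 : ℝ) / 3) with hz
  have hz0 : 0 < z := Real.rpow_pos_of_pos hx _
  have hz3 : z ^ 3 * x = 1 := by
    have : z ^ 3 = x ^ (-1 : ℝ) := by
      rw [hz, ← Real.rpow_natCast, ← Real.rpow_mul hx.le]; norm_num
    rw [this, Real.rpow_neg_one, inv_mul_cancel₀ hx.ne']
  -- With `u = z y²` the hypotheses read `10 / 11 ≤ u³ ≤ 10 / 9`.
  set u := z * y ^ 2 with hu
  have hu0 : 0 < u := by positivity
  have hu1 : 0.9 * u ^ 3 ≤ 1 := by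
    calc 0.9 * u ^ 3 = z ^ 3 * (0.9 * y ^ 6) := by rw [hu]; ring
      _ ≤ z ^ 3 * x := by gcongr
      _ = 1 := hz3
  have hu2 : 1 ≤ 1.1 * u ^ 3 := by
    calc 1 = z ^ 3 * x := hz3.symm
      _ ≤ z ^ 3 * (1.1 * y ^ 6) := by gcongr
      _ = 1.1 * u ^ 3 := by rw [hu]; ring
  constructor
  · rw [div_le_iff₀ (by positivity)]
    have : (1 : ℝ) / 2 ≤ u := by
      by_contra! h
      have : u ^ 3 < (1 / 2) ^ 3 := by gcongr
      norm_num at this hu2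
      linarith
    nlinarith
  · rw [le_div_iff₀ (by positivity)]
    have : u ≤ 1.1 := by
      by_contra! h
      have : (1.1 : ℝ) ^ 3 < u ^ 3 := by gcongr
      norm_num at this hu1
      linarith
    have h3 : z ^ 2 * y ^ 4 = u ^ 2 := by rw [hu]; ring
    rw [h3]
    nlinarith

/-- The Airy weight at `x`, at distance `d` from the resonance point `y⁶`. -/
lemma weight_le {x y : ℝ} (hy : 0 < y) (h1 : 0.9 * y ^ 6 ≤ x) (h2 : x ≤ 1.1 * y ^ 6)
    {d : ℝ} (hd : 0 ≤ d) {j : ℕ} (hj : j * (y ^ 4 / 2) ≤ d) :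
    (x ^ (-(1 : ℝ) / 3) * (1 + x ^ (-(1 : ℝ) / 3) * d) ^ (-(1 : ℝ) / 4)) ^ 2
      ≤ 2 / y ^ 4 * shellWeight y j := by
  obtain ⟨hz1, hz2⟩ := rpow_neg_third_bounds hy h1 h2
  set z := x ^ (-(1 : ℝ) / 3)
  have hz0 : 0 < z := lt_of_lt_of_le (by positivity) hz1
  have hone : 1 ≤ 1 + z * d := by nlinarith [mul_nonneg hz0.le hd]
  rw [mul_pow]
  gcongr
  have hsq : ((1 + z * d) ^ (-(1 : ℝ) / 4)) ^ 2 = (√(1 + z * d))⁻¹ := by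
    rw [← Real.rpow_natCast, ← Real.rpow_mul (by linarith), Real.sqrt_eq_rpow,
      ← Real.rpow_neg (by linarith)]
    norm_num
  rw [hsq, shellWeight]
  split_ifs with h0
  · exact inv_le_one_of_one_le₀ (Real.one_le_sqrt.2 hone)
  · have hj0 : (0 : ℝ) < j := by exact_mod_cast Nat.pos_of_ne_zero h0
    have hs : y * √(j : ℝ) / 2 ≤ √(1 + z * d) := by
      apply Real.le_sqrt_of_sq_le
      have hsj := Real.sq_sqrt hj0.le
      calc (y * √(j : ℝ) / 2) ^ 2 = 1 / (2 * y ^ 2) * (j * (y ^ 4 / 2)) := by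
            rw [div_pow, mul_pow, hsj]; field_simp
        _ ≤ z * d := by gcongr
        _ ≤ 1 + z * d := by linarith
    have hpos : 0 < y * √(j : ℝ) / 2 := by positivity
    calc (√(1 + z * d))⁻¹ ≤ (y * √(j : ℝ) / 2)⁻¹ := by gcongr
      _ = 2 / (y * √(j : ℝ)) := by rw [inv_div]

/-! ### Mass of a shell -/

/-- The short interval bound, restricted to finite sums. -/
def ShortInterval (s : ℕ → ℝ) (b ε : ℝ) : Prop :=
  ∀ N : ℕ, 1 ≤ N → ∀ F : Finset ℕ, (∀ k ∈ F, |(k : ℝ) - N| ≤ (N : ℝ) ^ ((2 : ℝ) / 3)) →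
    ∑ k ∈ F, s k ≤ b * (N : ℝ) ^ ((2 : ℝ) / 3 + ε)

/-- A set of integers of size `≈ y⁶` and diameter at most `y⁴ / 2` lies in a single short interval
centred at any one of its elements. -/
lemma cluster_mass {s : ℕ → ℝ} {b ε : ℝ} (hb : 0 < b) (hε : 0 < ε)
    (hs : ShortInterval s b ε) {y : ℝ} (hy : 0 < y) (F : Finset ℕ)
    (hF : ∀ k ∈ F, 1 ≤ k ∧ 0.9 * y ^ 6 ≤ k ∧ (k : ℝ) ≤ 1.1 * y ^ 6)
    (hd : ∀ k ∈ F, ∀ l ∈ F, (k : ℝ) - l ≤ y ^ 4 / 2) :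
    ∑ k ∈ F, s k ≤ b * (2 * y ^ 4 * (2 * y ^ 6) ^ ε) := by
  rcases F.eq_empty_or_nonempty with rfl | ⟨N, hN⟩
  · simp only [Finset.sum_empty]; positivity
  obtain ⟨hN1, hN2, hN3⟩ := hF N hN
  have hN0 : (0 : ℝ) < N := by exact_mod_cast hN1
  set v := (N : ℝ) ^ ((2 : ℝ) / 3) with hv
  have hv0 : 0 < v := Real.rpow_pos_of_pos hN0 _
  have hv3 : v ^ 3 = (N : ℝ) ^ 2 := by
    rw [hv, ← Real.rpow_natCast, ← Real.rpow_mul hN0.le]; norm_num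
  have hlow : y ^ 4 / 2 ≤ v := by
    by_contra! h
    have h3 : v ^ 3 < (y ^ 4 / 2) ^ 3 := by gcongr
    have h4 : (0.9 * y ^ 6) ^ 2 ≤ (N : ℝ) ^ 2 := by gcongr
    have : 0 < y ^ 12 := by positivity
    nlinarith
  have hup : v ≤ 2 * y ^ 4 := by
    by_contra! h
    have h3 : (2 * y ^ 4) ^ 3 < v ^ 3 := by gcongr
    have h4 : (N : ℝ) ^ 2 ≤ (1.1 * y ^ 6) ^ 2 := by gcongr
    have : 0 < y ^ 12 := by positivity
    nlinarith
  -- The element `N` serves as the centre, so no rounding is needed and `N ≥ 1` is automatic.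
  refine (hs N hN1 F fun k hk => ?_).trans ?_
  · exact abs_le.2 ⟨by linarith [hd N hN k hk], by linarith [hd k hk N hN]⟩
  · rw [Real.rpow_add hN0]
    have : (N : ℝ) ≤ 2 * y ^ 6 := by
      have : 0 < y ^ 6 := by positivity
      linarith
    gcongr

/-- A shell has two components, one on either side of the resonance point `y⁶`. -/
lemma shell_mass {s : ℕ → ℝ} {b ε : ℝ} (hb : 0 < b) (hε : 0 < ε)
    (hs : ShortInterval s b ε) {y : ℝ} (hy : 0 < y) (j : ℕ) (F : Finset ℕ)
    (hF : ∀ k ∈ F, 1 ≤ k ∧ 0.9 * y ^ 6 ≤ k ∧ (k : ℝ) ≤ 1.1 * y ^ 6)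
    (hd : ∀ k ∈ F, j * (y ^ 4 / 2) ≤ |y ^ 6 - (k : ℝ)| ∧
      |y ^ 6 - (k : ℝ)| ≤ (j + 1) * (y ^ 4 / 2)) :
    ∑ k ∈ F, s k ≤ 2 * (b * (2 * y ^ 4 * (2 * y ^ 6) ^ ε)) := by
  rw [← Finset.sum_filter_add_sum_filter_not F (fun k : ℕ => (k : ℝ) ≤ y ^ 6), two_mul]
  refine add_le_add (cluster_mass hb hε hs hy _ (fun k hk => hF k (Finset.mem_filter.1 hk).1) ?_)
    (cluster_mass hb hε hs hy _ (fun k hk => hF k (Finset.mem_filter.1 hk).1) ?_)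
  · intro k hk l hl
    rw [Finset.mem_filter] at hk hl
    have h1 := hd k hk.1
    have h2 := hd l hl.1
    rw [abs_of_nonneg (by linarith [hk.2])] at h1
    rw [abs_of_nonneg (by linarith [hl.2])] at h2
    linarith
  · intro k hk l hl
    rw [Finset.mem_filter, not_le] at hk hl
    have h1 := hd k hk.1
    have h2 := hd l hl.1
    rw [abs_of_neg (by linarith [hk.2])] at h1
    rw [abs_of_neg (by linarith [hl.2])] at h2
    linarith

/-! ### Resonance ranges -/

/-- The contribution of a resonance range around `X` is `O(X^ε)`. -/
lemma resonance_sum {s : ℕ → ℝ} {b ε : ℝ} (hs0 : ∀ k, 0 ≤ s k) (hb : 0 < b) (hε : 0 < ε)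
    (hs : ShortInterval s b ε) {X : ℝ} (hX : 0 < X) (F : Finset ℕ)
    (hF : ∀ k ∈ F, 1 ≤ k ∧ 0.9 * X ≤ k ∧ (k : ℝ) ≤ 1.1 * X) :
    ∑ k ∈ F, s k * ((k : ℝ) ^ (-(1 : ℝ) / 3) *
      (1 + (k : ℝ) ^ (-(1 : ℝ) / 3) * |X - (k : ℝ)|) ^ (-(1 : ℝ) / 4)) ^ 2
      ≤ 24 * b * (2 * X) ^ ε := by
  obtain ⟨y, hy, rfl⟩ : ∃ y : ℝ, 0 < y ∧ X = y ^ 6 :=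
    ⟨X ^ ((1 : ℝ) / 6), Real.rpow_pos_of_pos hX _, by
      rw [← Real.rpow_natCast, ← Real.rpow_mul hX.le]; norm_num⟩
  have hL : 0 < y ^ 4 / 2 := by positivity
  -- `|y⁶ - k| ≤ y⁶ / 10` forces the shell index to be at most `y² / 5 ≤ y² / 4`.
  set J : ℕ := ⌊y ^ 2 / 4⌋₊
  have hJ : (J : ℝ) ≤ y ^ 2 / 4 := Nat.floor_le (by positivity)
  set sh : ℕ → ℕ := fun k => ⌊|y ^ 6 - (k : ℝ)| / (y ^ 4 / 2)⌋₊ with hsh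
  have hsh1 : ∀ k : ℕ, sh k * (y ^ 4 / 2) ≤ |y ^ 6 - (k : ℝ)| := fun k => by
    rw [← le_div_iff₀ hL]; exact Nat.floor_le (by positivity)
  have hsh2 : ∀ k : ℕ, |y ^ 6 - (k : ℝ)| ≤ (sh k + 1) * (y ^ 4 / 2) := fun k => by
    rw [← div_le_iff₀ hL]; exact (Nat.lt_floor_add_one _).le
  have hmaps : ∀ k ∈ F, sh k ∈ range (J + 1) := by
    intro k hk
    obtain ⟨-, h2, h3⟩ := hF k hk
    rw [Finset.mem_range, Nat.lt_succ_iff]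
    apply Nat.floor_le_floor
    rw [div_le_iff₀ hL]
    have : 0 < y ^ 6 := by positivity
    rw [abs_le]
    constructor <;> nlinarith
  rw [← Finset.sum_fiberwise_of_maps_to hmaps]
  calc _ ≤ ∑ j ∈ range (J + 1), 2 * (b * (2 * y ^ 4 * (2 * y ^ 6) ^ ε)) *
        (2 / y ^ 4 * shellWeight y j) := by
        refine Finset.sum_le_sum fun j _ => ?_
        have hw0 : 0 ≤ 2 / y ^ 4 * shellWeight y j :=
          mul_nonneg (by positivity) (shellWeight_nonneg hy j)
        refine le_trans ?_ (mul_le_mul_of_nonneg_right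
          (shell_mass hb hε hs hy j (F.filter fun k => sh k = j) ?_ ?_) hw0)
        · rw [Finset.sum_mul]
          refine Finset.sum_le_sum fun k hk => ?_
          obtain ⟨hkF, rfl⟩ := Finset.mem_filter.1 hk
          obtain ⟨-, h2, h3⟩ := hF k hkF
          exact mul_le_mul_of_nonneg_left (weight_le hy h2 h3 (abs_nonneg _) (hsh1 k)) (hs0 k)
        · exact fun k hk => hF k (Finset.mem_filter.1 hk).1
        · intro k hk
          obtain ⟨-, rfl⟩ := Finset.mem_filter.1 hk
          exact ⟨hsh1 k, hsh2 k⟩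
    _ = 8 * b * (2 * y ^ 6) ^ ε * ∑ j ∈ range (J + 1), shellWeight y j := by
        rw [Finset.mul_sum]
        refine Finset.sum_congr rfl fun j _ => ?_
        field_simp; ring
    _ ≤ 8 * b * (2 * y ^ 6) ^ ε * 3 := by
        gcongr
        exact sum_shellWeight_le hy hJ
    _ = 24 * b * (2 * y ^ 6) ^ ε := by ring

/-- `resonance_sum` for arbitrary weights obeying the Airy bound around `X ≤ M n`,
with the constant made uniform over both resonance points. -/
lemma resonance_range {s v : ℕ → ℝ} {b ε M C₀ : ℝ} (hs0 : ∀ k, 0 ≤ s k) (hv0 : ∀ k, 0 ≤ v k)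
    (hb : 0 < b) (hε : 0 < ε) (hs : ShortInterval s b ε) (hM : 0 < M) {n : ℕ}
    {X : ℝ} (hX : 0 < X) (hXM : X ≤ M * n) (F : Finset ℕ)
    (hF : ∀ k ∈ F, 1 ≤ k ∧ 0.9 * X ≤ k ∧ (k : ℝ) ≤ 1.1 * X)
    (hv : ∀ k ∈ F, v k ≤ C₀ * (k : ℝ) ^ (-(1 : ℝ) / 3) *
      (1 + (k : ℝ) ^ (-(1 : ℝ) / 3) * |X - (k : ℝ)|) ^ (-(1 : ℝ) / 4)) :
    ∑ k ∈ F, s k * v k ^ 2 ≤ C₀ ^ 2 * (24 * b * (2 * M) ^ ε) * (n : ℝ) ^ ε := by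
  calc ∑ k ∈ F, s k * v k ^ 2
      ≤ ∑ k ∈ F, C₀ ^ 2 * (s k * ((k : ℝ) ^ (-(1 : ℝ) / 3) *
          (1 + (k : ℝ) ^ (-(1 : ℝ) / 3) * |X - (k : ℝ)|) ^ (-(1 : ℝ) / 4)) ^ 2) := by
        refine Finset.sum_le_sum fun k hk => ?_
        have h := mul_le_mul_of_nonneg_left (pow_le_pow_left₀ (hv0 k) (hv k hk) 2) (hs0 k)
        refine h.trans (le_of_eq ?_)
        ring
    _ ≤ C₀ ^ 2 * (24 * b * (2 * X) ^ ε) := by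
        rw [← Finset.mul_sum]
        gcongr
        exact resonance_sum hs0 hb hε hs hX F hF
    _ ≤ C₀ ^ 2 * (24 * b * (2 * M * n) ^ ε) := by
        rw [mul_assoc 2 M]
        gcongr
    _ = C₀ ^ 2 * (24 * b * (2 * M) ^ ε) * (n : ℝ) ^ ε := by
        rw [Real.mul_rpow (by positivity) (by positivity)]; ring

/-! ### Combining the ranges -/

lemma sum_le_sum_filter_cover {f : ℕ → ℝ} (hf : ∀ k, 0 ≤ f k) (F : Finset ℕ)
    (p q r t : ℕ → Prop) [DecidablePred p] [DecidablePred q] [DecidablePred r] [DecidablePred t]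
    (h : ∀ k ∈ F, p k ∨ q k ∨ r k ∨ t k) :
    ∑ k ∈ F, f k ≤ ∑ k ∈ F with p k, f k + ∑ k ∈ F with q k, f k + ∑ k ∈ F with r k, f k
      + ∑ k ∈ F with t k, f k := by
  simp only [Finset.sum_filter, ← Finset.sum_add_distrib]
  refine Finset.sum_le_sum fun k hk => ?_
  have := hf k
  have := h k hk
  split_ifs <;> first | linarith | tauto

/-- Combinatorial core of `Σ_k |a_k|² |d_k^{mod}(e_n)|² ≤ A_{λ,δ} n^δ`: the mean-value and
short-interval bounds on `s`, together with the regular, resonance (Airy) and cutoff bounds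
on the weights `w`, give `Σ_{k ≥ 1} s k · (w k n)² ≤ C n^δ`. -/
theorem spectral_weighted_bound (M A C₀ : ℝ) (hM : 2 ≤ M) (hA : 0 < A) (hC₀ : 0 < C₀)
    (B : ℝ → ℝ) (hB : ∀ ε : ℝ, 0 < ε → 0 < B ε) :
    ∀ δ : ℝ, 0 < δ →
      ∃ C : ℝ, 0 < C ∧
        ∀ (s : ℕ → ℝ) (w : ℕ → ℕ → ℝ),
          (∀ k, 0 ≤ s k) → (∀ k n, 0 ≤ w k n) →
          -- mean value bound
          (∀ T : ℝ, 1 ≤ T →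
            ∑' k : {k : ℕ // (k : ℝ) ≤ T}, ENNReal.ofReal (s k) ≤ ENNReal.ofReal (A * T)) →
          -- short interval bound
          (∀ ε : ℝ, 0 < ε → ∀ N : ℕ, 1 ≤ N →
            ∑' k : {k : ℕ // |(k : ℝ) - (N : ℝ)| ≤ (N : ℝ) ^ ((2 : ℝ) / 3)},
                ENNReal.ofReal (s k)
              ≤ ENNReal.ofReal (B ε * (N : ℝ) ^ ((2 : ℝ) / 3 + ε))) →
          -- (i) regular range
          (∀ n k : ℕ, 1 ≤ n → 1 ≤ k →
            (1.1 : ℝ) * M⁻¹ * n ≤ k → (k : ℝ) ≤ (0.9 : ℝ) * M * n →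
            w k n ≤ C₀ * (n : ℝ) ^ (-(1 : ℝ) / 2)) →
          -- (ii) resonance range near M·n
          (∀ n k : ℕ, 1 ≤ n → 1 ≤ k →
            (0.9 : ℝ) * M * n ≤ k → (k : ℝ) ≤ (1.1 : ℝ) * M * n →
            w k n ≤ C₀ * (k : ℝ) ^ (-(1 : ℝ) / 3) *
              (1 + (k : ℝ) ^ (-(1 : ℝ) / 3) * |M * (n : ℝ) - (k : ℝ)|) ^ (-(1 : ℝ) / 4)) →
          -- (iii) resonance range near M⁻¹·n
          (∀ n k : ℕ, 1 ≤ n → 1 ≤ k →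
            (0.9 : ℝ) * M⁻¹ * n ≤ k → (k : ℝ) ≤ (1.1 : ℝ) * M⁻¹ * n →
            w k n ≤ C₀ * (k : ℝ) ^ (-(1 : ℝ) / 3) *
              (1 + (k : ℝ) ^ (-(1 : ℝ) / 3) * |M⁻¹ * (n : ℝ) - (k : ℝ)|) ^ (-(1 : ℝ) / 4)) →
          -- (iv) cutoff range
          (∀ n k : ℕ, 1 ≤ n → 1 ≤ k →
            ((1.1 : ℝ) * M * n ≤ k ∨ (k : ℝ) ≤ (0.9 : ℝ) * M⁻¹ * n) →
            w k n ≤ C₀ * ((k : ℝ) + (n : ℝ)) ^ (-2 : ℤ)) →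
          ∀ n : ℕ, 1 ≤ n →
            ∑' k : {k : ℕ // 1 ≤ k}, ENNReal.ofReal (s k * w k n ^ 2)
              ≤ ENNReal.ofReal (C * (n : ℝ) ^ δ) := by
  intro δ hδ
  have hM0 : 0 < M := by linarith
  have hMi : 0 < M⁻¹ := inv_pos.2 hM0
  have hMi1 : M⁻¹ ≤ M := (inv_le_one_of_one_le₀ (by linarith)).trans (by linarith)
  have hBδ := hB δ hδ
  have hsumm : Summable fun k : ℕ => 1 / (k : ℝ) ^ 2 :=
    Real.summable_one_div_nat_pow.2 one_lt_two
  set Z : ℝ := ∑' k : ℕ, 1 / (k : ℝ) ^ 2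
  have hZ : 0 ≤ Z := tsum_nonneg fun k => by positivity
  set R : ℝ := C₀ ^ 2 * (24 * B δ * (2 * M) ^ δ)
  have hR : 0 ≤ R := by positivity
  refine ⟨C₀ ^ 2 * A * M + R + R + A * C₀ ^ 2 * Z, by positivity, ?_⟩
  intro s w hs0 hw0 hmean hshort h1 h2 h3 h4 n hn
  have hn0 : (0 : ℝ) < n := by exact_mod_cast hn
  have hn1 : (1 : ℝ) ≤ n := by exact_mod_cast hn
  have hmean' : ∀ T : ℝ, 1 ≤ T → ∀ F : Finset ℕ, (∀ k ∈ F, (k : ℝ) ≤ T) →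
      ∑ k ∈ F, s k ≤ A * T := fun T hT F hF =>
    sum_le_of_tsum_le hs0 (by positivity) (hmean T hT) F hF
  have hSI : ShortInterval s (B δ) δ := fun N hN F hF =>
    sum_le_of_tsum_le hs0 (by positivity) (hshort δ hδ N hN) F hF
  have hf0 : ∀ k, 0 ≤ s k * w k n ^ 2 := fun k => mul_nonneg (hs0 k) (sq_nonneg _)
  refine tsum_le_of_sum_le (p := fun k => 1 ≤ k) hf0 fun F hF => ?_
  have hnδ : 1 ≤ (n : ℝ) ^ δ := Real.one_le_rpow hn1 hδ.le
  classical
  refine (sum_le_sum_filter_cover hf0 F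
    (fun k => 1.1 * M⁻¹ * n ≤ k ∧ (k : ℝ) ≤ 0.9 * M * n)
    (fun k => 0.9 * M * n ≤ k ∧ (k : ℝ) ≤ 1.1 * M * n)
    (fun k => 0.9 * M⁻¹ * n ≤ k ∧ (k : ℝ) ≤ 1.1 * M⁻¹ * n)
    (fun k => 1.1 * M * n ≤ k ∨ (k : ℝ) ≤ 0.9 * M⁻¹ * n) ?_).trans ?_
  · intro k _
    grind
  rw [add_mul, add_mul, add_mul]
  refine add_le_add (add_le_add (add_le_add ?_ ?_) ?_) ?_
  · refine le_trans ?_ (le_mul_of_one_le_right (by positivity) hnδ)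
    have hb : ∀ k ∈ F.filter (fun k : ℕ => 1.1 * M⁻¹ * n ≤ k ∧ (k : ℝ) ≤ 0.9 * M * n),
        s k * w k n ^ 2 ≤ C₀ ^ 2 / n * s k := by
      intro k hk
      obtain ⟨hkF, hk1, hk2⟩ := Finset.mem_filter.1 hk
      have h := pow_le_pow_left₀ (hw0 k n) (h1 n k hn (hF k hkF) hk1 hk2) 2
      have he : (C₀ * (n : ℝ) ^ (-(1 : ℝ) / 2)) ^ 2 = C₀ ^ 2 / n := by
        rw [mul_pow, ← Real.rpow_natCast ((n : ℝ) ^ _), ← Real.rpow_mul hn0.le,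
          show -(1 : ℝ) / 2 * ((2 : ℕ) : ℝ) = -1 by norm_num, Real.rpow_neg_one, div_eq_mul_inv]
      rw [he] at h
      calc _ ≤ s k * (C₀ ^ 2 / n) := mul_le_mul_of_nonneg_left h (hs0 k)
        _ = _ := mul_comm _ _
    refine (Finset.sum_le_sum hb).trans ?_
    rw [← Finset.mul_sum]
    calc _ ≤ C₀ ^ 2 / n * (A * (M * n)) := by
          gcongr
          refine hmean' (M * n) (by nlinarith) _ fun k hk => ?_
          have := (Finset.mem_filter.1 hk).2.2
          nlinarith [mul_pos hM0 hn0]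
      _ = C₀ ^ 2 * A * M := by field_simp
  · refine resonance_range (C₀ := C₀) (X := M * n) hs0 (fun k => hw0 k n) hBδ hδ hSI hM0
      (by positivity) le_rfl _ ?_ ?_
    all_goals
      intro k hk
      obtain ⟨hkF, hk1, hk2⟩ := Finset.mem_filter.1 hk
    · exact ⟨hF k hkF, by linarith, by linarith⟩
    · exact h2 n k hn (hF k hkF) hk1 hk2
  · refine resonance_range (C₀ := C₀) (X := M⁻¹ * n) hs0 (fun k => hw0 k n) hBδ hδ hSI hM0
      (by positivity) (by gcongr) _ ?_ ?_
    all_goals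
      intro k hk
      obtain ⟨hkF, hk1, hk2⟩ := Finset.mem_filter.1 hk
    · exact ⟨hF k hkF, by linarith, by linarith⟩
    · exact h3 n k hn (hF k hkF) hk1 hk2
  · refine le_trans ?_ (le_mul_of_one_le_right (by positivity) hnδ)
    have hb : ∀ k ∈ F.filter (fun k : ℕ => 1.1 * M * n ≤ k ∨ (k : ℝ) ≤ 0.9 * M⁻¹ * n),
        s k * w k n ^ 2 ≤ A * C₀ ^ 2 * (1 / (k : ℝ) ^ 2) := by
      intro k hk
      obtain ⟨hkF, hk1⟩ := Finset.mem_filter.1 hk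
      have hk0 : (1 : ℝ) ≤ k := by exact_mod_cast hF k hkF
      have hsk : s k ≤ A * k := by
        simpa using hmean' k hk0 {k} (by simp)
      have hw : w k n ≤ C₀ / (k : ℝ) ^ 2 := by
        refine (h4 n k hn (hF k hkF) hk1).trans ?_
        rw [div_eq_mul_inv, zpow_neg]
        gcongr
        norm_cast
        gcongr
        omega
      calc s k * w k n ^ 2 ≤ A * k * (C₀ / (k : ℝ) ^ 2) ^ 2 := by
            have := hw0 k n
            gcongr
        _ = A * C₀ ^ 2 * (1 / (k : ℝ) ^ 2) * (1 / k) := by field_simp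
        _ ≤ A * C₀ ^ 2 * (1 / (k : ℝ) ^ 2) * 1 := by
            gcongr
            rw [div_le_one (by linarith)]
            exact hk0
        _ = _ := mul_one _
    refine (Finset.sum_le_sum hb).trans ?_
    rw [← Finset.mul_sum]
    gcongr
    exact hsumm.sum_le_tsum _ fun k _ => by positivity
end

section
/- Let Λ ∈ ℤ and let c : ℤ³ → ℂ be finitely supported with c(m) = 0 whenever m₁² + m₂² − m₃² ≠ Λ. Then Σ_{(m₁,m₂) ∈ ℤ²} |Σ_{m₃ ∈ ℤ} c(m₁,m₂,m₃)|² ≤ 2·Σ_{m ∈ ℤ³} |c(m)|². (Equivalently: any trigonometric polynomial f(x) = Σ_m c(m)·e^{i(m₁x₁+m₂x₂+m₃x₃)} on the 3-torus that is an eigenfunction of the constant-coefficient hyperbolic operator ∂₁² + ∂₂² − ∂₃² with eigenvalue −Λ satisfies (2π)^{−2}∫_{[0,2π]²} |f(x₁,x₂,0)|² dx₁dx₂ ≤ 2·(2π)^{−3}∫_{[0,2π]³} |f|².) -/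
/-! By Cauchy–Schwarz on each vertical fibre: for fixed `(m₁, m₂)` the equation
`m₁² + m₂² − m₃² = Λ` reads `m₃² = m₁² + m₂² − Λ`, which has at most two integer solutions `±r`.
Hence `|Σ_{m₃} c(m₁,m₂,m₃)|² ≤ 2 Σ_{m₃} |c(m₁,m₂,m₃)|²` (`norm_tsum_sq_le_of_sq_eq`), and summing
over `(m₁, m₂)` gives the bound. -/

/-- Cauchy–Schwarz for a function supported on the at most two square roots of `K`. -/
lemma norm_tsum_sq_le_of_sq_eq (K : ℤ) (g : ℤ → ℂ) (hg : ∀ q, q ^ 2 ≠ K → g q = 0) :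
    ‖∑' q, g q‖ ^ 2 ≤ 2 * ∑' q, ‖g q‖ ^ 2 := by
  by_cases hK : ∃ r : ℤ, r ^ 2 = K
  · obtain ⟨r, rfl⟩ := hK
    have h0 : ∀ q ∉ ({r, -r} : Finset ℤ), g q = 0 := fun q hq => hg q fun h => hq <| by
      simpa using sq_eq_sq_iff_eq_or_eq_neg.mp h
    have hcard : ((({r, -r} : Finset ℤ).card : ℕ) : ℝ) ≤ 2 := by
      exact_mod_cast Finset.card_le_two
    rw [tsum_eq_sum h0, tsum_eq_sum (s := {r, -r}) fun q hq => by simp [h0 q hq]]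
    calc ‖∑ q ∈ {r, -r}, g q‖ ^ 2 ≤ (∑ q ∈ {r, -r}, ‖g q‖) ^ 2 := by
          gcongr
          exact norm_sum_le _ _
      _ ≤ _ := sq_sum_le_card_mul_sum_sq
      _ ≤ _ := by gcongr
  · have h0 : ∀ q, g q = 0 := fun q => hg q fun h => hK ⟨q, h⟩
    simp [h0]

/-- Restriction bound for eigenfunctions of the constant-coefficient hyperbolic operator
`∂₁² + ∂₂² − ∂₃²` on the 3-torus, in Fourier-coefficient form: if `c : ℤ³ → ℂ` is finitely
supported and vanishes off the quadric `m₁² + m₂² − m₃² = Λ`, then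
`Σ_{(m₁,m₂)} |Σ_{m₃} c(m₁,m₂,m₃)|² ≤ 2 Σ_m |c m|²`. -/
theorem torus_restriction_bound (Λ : ℤ) (c : ℤ × ℤ × ℤ → ℂ)
    (hfin : (Function.support c).Finite)
    (hquad : ∀ m : ℤ × ℤ × ℤ, m.1 ^ 2 + m.2.1 ^ 2 - m.2.2 ^ 2 ≠ Λ → c m = 0) :
    ∑' p : ℤ × ℤ, ‖∑' q : ℤ, c (p.1, p.2, q)‖ ^ 2 ≤ 2 * ∑' m : ℤ × ℤ × ℤ, ‖c m‖ ^ 2 := by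
  have hsum : Summable fun m : (ℤ × ℤ) × ℤ => ‖c (m.1.1, m.1.2, m.2)‖ ^ 2 := by
    have h : Summable fun m => ‖c m‖ ^ 2 :=
      summable_of_hasFiniteSupport <| hfin.subset fun m hm hc => hm (by simp [hc])
    exact (Equiv.prodAssoc ℤ ℤ ℤ).summable_iff.mpr h
  have hfib : ∑' m : ℤ × ℤ × ℤ, ‖c m‖ ^ 2 = ∑' p : ℤ × ℤ, ∑' q, ‖c (p.1, p.2, q)‖ ^ 2 := by
    rw [← hsum.tsum_prod]
    exact ((Equiv.prodAssoc ℤ ℤ ℤ).tsum_eq fun m => ‖c m‖ ^ 2).symm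
  have hle : ∀ p : ℤ × ℤ,
      ‖∑' q, c (p.1, p.2, q)‖ ^ 2 ≤ 2 * ∑' q, ‖c (p.1, p.2, q)‖ ^ 2 := fun p =>
    norm_tsum_sq_le_of_sq_eq (p.1 ^ 2 + p.2 ^ 2 - Λ) _ fun q hq =>
      hquad _ fun h => hq (by simp only at h; linarith)
  have hR : Summable fun p : ℤ × ℤ => 2 * ∑' q, ‖c (p.1, p.2, q)‖ ^ 2 := hsum.prod.mul_left 2
  rw [hfib, ← tsum_mul_left]
  exact (Summable.of_nonneg_of_le (fun _ => by positivity) hle hR).tsum_le_tsum hle hR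
end
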